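/- Let K be an algebraically closed field and Δ a simplicial complex on X = {x_1,...,x_n} such that I_Δ is a set-theoretic complete intersection. If F is a subfacet of Δ and Δ' = Δ ∪ co_{x_0}F, then I_{Δ'} is also a set-theoretic complete intersection. -/

import Mathlib

open MvPolynomial

section Core

variable {V : Type*} [DecidableEq V]

/-- `Δ` is a simplicial complex on the vertex set `V`: every singleton is a face
and faces are closed under taking subsets. -/
def IsSimplicialComplex (Δ : Set (Finset V)) : Prop :=
  (∀ v : V, ({v} : Finset V) ∈ Δ) ∧ ∀ F ∈ Δ, ∀ G ⊆ F, G ∈ Δ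

/-- The Stanley-Reisner ideal of `Δ` over `K`: generated by the squarefree monomials
whose support is not a face of `Δ`. -/
noncomputable def srIdeal (K : Type*) [Field K] (Δ : Set (Finset V)) :
    Ideal (MvPolynomial V K) :=
  Ideal.span ((fun S : Finset V => ∏ v ∈ S, (X v : MvPolynomial V K)) '' {S | S ∉ Δ})

/-- The simplicial complex `Δ ∪ co_{x₀} F` on the vertex set `V ∪ {x₀}`,
realized as `Option V` with `none` playing the role of the new vertex `x₀`. -/
def coneUnion (Δ : Set (Finset V)) (F : Finset V) : Set (Finset (Option V)) :=
  ((fun G : Finset V => G.map Function.Embedding.some) '' Δ) ∪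
    {G : Finset (Option V) | G ⊆ insert none (F.map Function.Embedding.some)}

/-- A facet is a maximal face. -/
def IsFacet (Δ : Set (Finset V)) (F : Finset V) : Prop :=
  F ∈ Δ ∧ ∀ G ∈ Δ, F ⊆ G → F = G

/-- The prime ideal `P_F` generated by the variables not in `F`. -/
noncomputable def facePrime (K : Type*) [Field K] (F : Finset V) :
    Ideal (MvPolynomial V K) :=
  Ideal.span ((fun v : V => (X v : MvPolynomial V K)) '' {v : V | v ∉ F})

/-- The dimension of a simplicial complex. -/
noncomputable def scDim (Δ : Set (Finset V)) : ℕ := sSup (Finset.card '' Δ) - 1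

/-- A subfacet of a (pure) complex: a face whose cardinality equals the dimension. -/
noncomputable def IsSubfacet (Δ : Set (Finset V)) (F : Finset V) : Prop :=
  F ∈ Δ ∧ F.card = scDim Δ

end Core

/-- The arithmetical rank of an ideal: the least number of elements generating it
up to radical. -/
noncomputable def ara {R : Type*} [CommRing R] (I : Ideal R) : ℕ :=
  sInf {s : ℕ | ∃ a : Fin s → R, (Ideal.span (Set.range a)).radical = I.radical}

/-- The height of an ideal: the infimum of the heights of the primes containing it. -/
noncomputable def idealHeight {R : Type*} [CommRing R] (I : Ideal R) : ℕ∞ :=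
  ⨅ p : {p : PrimeSpectrum R // I ≤ p.asIdeal}, Order.height p.1


section Helpers

theorem ara_spec {R : Type*} [CommRing R] [IsNoetherianRing R] (I : Ideal R) :
    ∃ a : Fin (ara I) → R, (Ideal.span (Set.range a)).radical = I.radical := by
  have hne : {s : ℕ | ∃ a : Fin s → R,
      (Ideal.span (Set.range a)).radical = I.radical}.Nonempty := by
    obtain ⟨n, s, hs⟩ := Submodule.fg_iff_exists_fin_generating_family.mp
      (IsNoetherian.noetherian I)
    exact ⟨n, s, by rw [← hs]⟩
  exact Nat.sInf_mem hne

theorem krull_radical {R : Type*} [CommRing R] [IsNoetherianRing R] (I p : Ideal R)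
    (hp : p ∈ I.minimalPrimes) {s : ℕ} (a : Fin s → R)
    (ha : (Ideal.span (Set.range a)).radical = I.radical) : p.height ≤ s := by
  rw [← Ideal.radical_minimalPrimes, ← ha, Ideal.radical_minimalPrimes] at hp
  refine (Ideal.height_le_card_of_mem_minimalPrimes_span (Set.finite_range a) hp).trans ?_
  rw [← Set.image_univ]
  have := Set.ncard_image_le (f := a) (Set.finite_univ (α := Fin s))
  rw [Set.ncard_univ, Nat.card_eq_fintype_card, Fintype.card_fin] at this
  exact_mod_cast this

/-- Every prime over `I` has height at least `idealHeight I`. -/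
theorem idealHeight_le {R : Type*} [CommRing R] (I p : Ideal R) (hp : p.IsPrime) (h : I ≤ p) :
    idealHeight I ≤ p.height := by
  have := PrimeSpectrum.height_eq_orderHeight (⟨p, hp⟩ : PrimeSpectrum R)
  rw [show p.height = _ from this]
  exact iInf_le (fun p : {p : PrimeSpectrum R // I ≤ p.asIdeal} => Order.height p.1)
    ⟨⟨p, hp⟩, h⟩

theorem le_idealHeight {R : Type*} [CommRing R] (I : Ideal R) (n : ℕ∞)
    (h : ∀ p : Ideal R, p.IsPrime → I ≤ p → n ≤ p.height) : n ≤ idealHeight I := by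
  refine le_iInf fun p => ?_
  rw [← PrimeSpectrum.height_eq_orderHeight]
  exact h _ p.1.2 p.2

variable {V : Type*} [DecidableEq V] (K : Type*) [Field K]

/-- Set the variables outside `F` to zero. -/
noncomputable def killMap (F : Finset V) : MvPolynomial V K →ₐ[K] MvPolynomial V K :=
  aeval (fun v => if v ∈ F then X v else 0)

theorem facePrime_eq_ker (F : Finset V) :
    facePrime K F = RingHom.ker (killMap K F).toRingHom := by
  apply le_antisymm
  · refine Ideal.span_le.mpr ?_
    rintro _ ⟨v, hv, rfl⟩
    have hv' : v ∉ F := hv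
    simp [killMap, RingHom.mem_ker, hv']
  · intro f hf
    have key : (Ideal.Quotient.mkₐ K (facePrime K F)).comp (killMap K F)
        = Ideal.Quotient.mkₐ K (facePrime K F) := by
      apply MvPolynomial.algHom_ext
      intro v
      by_cases hv : v ∈ F
      · simp [killMap, hv]
      · have : (X v : MvPolynomial V K) ∈ facePrime K F :=
          Ideal.subset_span ⟨v, hv, rfl⟩
        simp only [killMap, AlgHom.comp_apply, aeval_X, if_neg hv, map_zero]
        exact (Ideal.Quotient.eq_zero_iff_mem.mpr this).symm
    have h0 : killMap K F f = 0 := hf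
    have := DFunLike.congr_fun key f
    rw [AlgHom.comp_apply, h0, map_zero] at this
    exact Ideal.Quotient.eq_zero_iff_mem.mp this.symm

theorem facePrime_isPrime (F : Finset V) : (facePrime K F).IsPrime := by
  rw [facePrime_eq_ker]
  exact RingHom.ker_isPrime _

theorem X_mem_facePrime (F : Finset V) (v : V) :
    (X v : MvPolynomial V K) ∈ facePrime K F ↔ v ∉ F := by
  constructor
  · intro h hv
    rw [facePrime_eq_ker] at h
    have h : killMap K F (X v) = 0 := h
    simp [killMap, hv] at h
  · intro h
    exact Ideal.subset_span ⟨v, h, rfl⟩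

theorem facePrime_anti {F G : Finset V} (h : F ⊆ G) : facePrime K G ≤ facePrime K F :=
  Ideal.span_mono (Set.image_mono fun _ hv hv' => hv (h hv'))

theorem srIdeal_le_facePrime (Δ : Set (Finset V)) (hΔ : IsSimplicialComplex Δ)
    (F : Finset V) (hF : F ∈ Δ) : srIdeal K Δ ≤ facePrime K F := by
  refine Ideal.span_le.mpr ?_
  rintro _ ⟨S, hS, rfl⟩
  have : ¬ S ⊆ F := fun h => hS (hΔ.2 F hF S h)
  obtain ⟨v, hvS, hvF⟩ := Finset.not_subset.mp this
  exact Ideal.mem_of_dvd _ (Finset.dvd_prod_of_mem _ hvS) ((X_mem_facePrime K F v).mpr hvF)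

theorem prod_mem_of_mem {R : Type*} [CommRing R] {ι : Type*} (p : Ideal R) (S : Finset ι)
    (f : ι → R) (i : ι) (hi : i ∈ S) (h : f i ∈ p) : ∏ v ∈ S, f v ∈ p :=
  Ideal.mem_of_dvd _ (Finset.dvd_prod_of_mem _ hi) h

variable [Fintype V]

theorem facePrime_height_ge (F : Finset V) :
    ((Fᶜ).card : ℕ∞) ≤ (facePrime K F).height := by
  suffices h : ∀ T : Finset V, (T.card : ℕ∞) ≤ (facePrime K (Tᶜ)).height by
    simpa using h Fᶜ
  intro T
  induction T using Finset.induction_on with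
  | empty => simp
  | insert v T hv ih =>
    have h1 := facePrime_isPrime K (Tᶜ)
    have h2 := facePrime_isPrime K ((insert v T)ᶜ)
    have hlt : facePrime K (Tᶜ) < facePrime K ((insert v T)ᶜ) := by
      refine lt_of_le_of_ne (facePrime_anti K
        (Finset.compl_subset_compl.mpr (Finset.subset_insert v T))) fun h => ?_
      have : (X v : MvPolynomial V K) ∈ facePrime K ((insert v T)ᶜ) := by
        rw [X_mem_facePrime]; simp
      rw [← h, X_mem_facePrime] at this
      simp [hv] at this
    have := Ideal.height_add_one_le_of_lt_of_isPrime hlt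
    rw [Finset.card_insert_of_notMem hv]
    push_cast
    exact (add_le_add_left ih 1).trans this

theorem facePrime_height_le (F : Finset V) :
    (facePrime K F).height ≤ ((Fᶜ).card : ℕ∞) := by
  have hp := facePrime_isPrime K F
  have hm : facePrime K F ∈ (facePrime K F).minimalPrimes := by
    rw [Ideal.minimalPrimes_eq_subsingleton_self]; rfl
  refine (Ideal.height_le_card_of_mem_minimalPrimes_span (Set.toFinite _) hm).trans ?_
  have h1 := Set.ncard_image_le (f := fun v : V => (X v : MvPolynomial V K))
    (Set.toFinite {v : V | v ∉ F})
  have h2 : {v : V | v ∉ F} = ((Fᶜ : Finset V) : Set V) := by ext; simp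
  have h3 : ({v : V | v ∉ F}).ncard = (Fᶜ).card := by rw [h2, Set.ncard_coe_finset]
  rw [h3] at h1
  exact_mod_cast h1

/-- Any prime over the Stanley-Reisner ideal contains a face prime. -/
theorem exists_face_le (Δ : Set (Finset V)) (p : Ideal (MvPolynomial V K)) (hp : p.IsPrime)
    (h : srIdeal K Δ ≤ p) : ∃ G ∈ Δ, facePrime K G ≤ p := by
  classical
  refine ⟨Finset.univ.filter (fun v => (X v : MvPolynomial V K) ∉ p), ?_, ?_⟩
  · by_contra hn
    have : ∏ v ∈ Finset.univ.filter (fun v => (X v : MvPolynomial V K) ∉ p),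
        (X v : MvPolynomial V K) ∈ p := h (Ideal.subset_span ⟨_, hn, rfl⟩)
    obtain ⟨v, hv, hv'⟩ := (hp.prod_mem_iff).mp this
    simp at hv
    exact hv hv'
  · refine Ideal.span_le.mpr ?_
    rintro _ ⟨v, hv, rfl⟩
    simpa using hv

theorem srIdeal_height_ge (Δ : Set (Finset V)) (m : ℕ)
    (h : ∀ G ∈ Δ, m ≤ (Gᶜ).card) : (m : ℕ∞) ≤ idealHeight (srIdeal K Δ) := by
  refine le_idealHeight _ _ fun p hp hle => ?_
  obtain ⟨G, hG, hGp⟩ := exists_face_le K Δ p hp hle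
  refine le_trans ?_ ((facePrime_height_ge K G).trans (Ideal.height_mono hGp))
  exact_mod_cast h G hG

theorem coneUnion_le_iff (Δ : Set (Finset V)) (hΔ : IsSimplicialComplex Δ)
    (F : Finset V) (hF : F ∈ Δ) (p : Ideal (MvPolynomial (Option V) K)) (hp : p.IsPrime) :
    srIdeal K (coneUnion Δ F) ≤ p ↔
      srIdeal K Δ ≤ p.comap (rename (some : V → Option V)).toRingHom ∧
      ((X none : MvPolynomial (Option V) K) ∈ p ∨
        ∀ v ∉ F, (X (some v) : MvPolynomial (Option V) K) ∈ p) := by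
  have hren : ∀ S : Finset V, (rename (some : V → Option V)).toRingHom
      (∏ v ∈ S, (X v : MvPolynomial V K)) =
      ∏ v ∈ S.map Function.Embedding.some, (X v : MvPolynomial (Option V) K) := by
    intro S
    simp
  constructor
  · intro h
    refine ⟨Ideal.span_le.mpr ?_, ?_⟩
    · rintro _ ⟨S, hS, rfl⟩
      rw [SetLike.mem_coe, Ideal.mem_comap]
      rw [hren]
      refine h (Ideal.subset_span ⟨_, ?_, rfl⟩)
      rintro (⟨G, hG, hGS⟩ | hsub)
      · exact hS ((Finset.map_injective _ hGS) ▸ hG)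
      · refine hS (hΔ.2 F hF S fun v hv => ?_)
        have := hsub (Finset.mem_map_of_mem Function.Embedding.some hv)
        simpa using this
    · by_contra hcon
      push Not at hcon
      obtain ⟨h0, v, hvF, hv⟩ := hcon
      have : (∏ u ∈ ({none, some v} : Finset (Option V)), (X u : MvPolynomial (Option V) K)) ∈ p := by
        refine h (Ideal.subset_span ⟨_, ?_, rfl⟩)
        rintro (⟨G, hG, hGS⟩ | hsub)
        · have : (none : Option V) ∈ G.map Function.Embedding.some := by
            rw [show G.map Function.Embedding.some = _ from hGS]; simp
          simp at this
        · have := hsub (show some v ∈ ({none, some v} : Finset (Option V)) by simp)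
          simp [hvF] at this
      obtain ⟨u, hu, hu'⟩ := (hp.prod_mem_iff).mp this
      simp at hu
      rcases hu with rfl | rfl
      · exact h0 hu'
      · exact hv hu'
  · rintro ⟨h1, h2⟩
    refine Ideal.span_le.mpr ?_
    rintro _ ⟨S, hS, rfl⟩
    by_cases hn : none ∈ S
    · have hns : ¬ S ⊆ insert none (F.map Function.Embedding.some) := fun h => hS (Or.inr h)
      obtain ⟨u, huS, hu⟩ := Finset.not_subset.mp hns
      rcases h2 with h2 | h2
      · exact prod_mem_of_mem p S _ none hn h2
      · cases u with
        | none => simp at hu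
        | some v => exact prod_mem_of_mem p S _ (some v) huS (h2 v (by simpa using hu))
    · have hS' : S = (Finset.eraseNone S).map Function.Embedding.some := by
        rw [Finset.map_some_eraseNone, Finset.erase_eq_of_notMem hn]
      have hnf : Finset.eraseNone S ∉ Δ := fun h => hS (Or.inl ⟨_, h, hS'.symm⟩)
      have := h1 (Ideal.subset_span ⟨_, hnf, rfl⟩)
      rw [Ideal.mem_comap] at this
      rw [hS', SetLike.mem_coe]
      have h3 := hren (Finset.eraseNone S)
      beta_reduce at this ⊢
      rw [h3] at this
      exact this

/-- The determinantal trick. -/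
theorem det_trick {R ι : Type*} [CommRing R] [Fintype ι] [DecidableEq ι]
    (a y : ι → R) (y0 x0 : R) (C : Matrix ι ι R) (hC : ∀ i, a i = ∑ j, C i j * y j) :
    ∃ (q0 : R) (q : ι → R), ∀ p : Ideal R, p.IsPrime →
      ((q0 ∈ p ∧ ∀ i, q i ∈ p) ↔
        (∀ i, a i ∈ p) ∧ (x0 ∈ p ∨ (y0 ∈ p ∧ ∀ i, y i ∈ p))) := by
  let M : Matrix ι ι R := Matrix.of fun i j => (if i = j then x0 else 0) + a i * C i j
  let D := M.det
  let h := Fintype.card ι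
  have hM : ∀ i, M.mulVec y i = a i ^ 2 + x0 * y i := by
    intro i
    have : M.mulVec y i = ∑ j, ((if i = j then x0 else 0) * y j + a i * (C i j * y j)) := by
      simp only [Matrix.mulVec, dotProduct, M, Matrix.of_apply]
      exact Finset.sum_congr rfl fun j _ => by ring
    rw [this, Finset.sum_add_distrib, ← Finset.mul_sum, ← hC]
    simp
    ring
  have hDy : ∀ p : Ideal R, (∀ i, M.mulVec y i ∈ p) → ∀ i, D * y i ∈ p := by
    intro p hp i
    have h1 : M.adjugate.mulVec (M.mulVec y) = D • y := by
      rw [Matrix.mulVec_mulVec, Matrix.adjugate_mul, Matrix.smul_mulVec, Matrix.one_mulVec]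
    have h2 : D * y i = ∑ j, M.adjugate i j * M.mulVec y j := by
      have := congrFun h1 i
      simpa [Matrix.mulVec, dotProduct] using this.symm
    rw [h2]
    exact Ideal.sum_mem _ fun j _ => Ideal.mul_mem_left _ _ (hp j)
  have hD : ∀ p : Ideal R, (∀ i, a i ∈ p) → D - x0 ^ h ∈ p := by
    intro p hp
    rw [← Ideal.Quotient.eq_zero_iff_mem, map_sub, sub_eq_zero]
    have : (Ideal.Quotient.mk p).mapMatrix M = Matrix.diagonal fun _ => Ideal.Quotient.mk p x0 := by
      ext i j
      have := Ideal.Quotient.eq_zero_iff_mem.mpr (hp i)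
      by_cases hij : i = j
      · subst hij; simp [M, this]
      · simp [M, this, hij]
    simp only [D]
    rw [RingHom.map_det, this, Matrix.det_diagonal]
    simp [h]
  refine ⟨x0 ^ h - D + y0 * x0 * D, fun i => a i ^ 2 + x0 * y i, fun p hp => ?_⟩
  have hq0 : ∀ (_ : ∀ i, a i ∈ p),
      (x0 ^ h - D + y0 * x0 * D ∈ p ↔ y0 * x0 ^ (h + 1) ∈ p) := by
    intro ha
    have hd := hD p ha
    have e : x0 ^ h - D + y0 * x0 * D = (D - x0 ^ h) * (y0 * x0 - 1) + y0 * x0 ^ (h + 1) := by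
      ring
    rw [e]
    exact Ideal.add_mem_iff_right _ (Ideal.mul_mem_right _ _ hd)
  constructor
  · rintro ⟨h0, hi⟩
    by_cases hx : x0 ∈ p
    · refine ⟨fun i => ?_, Or.inl hx⟩
      refine hp.mem_of_pow_mem 2 ?_
      exact (Ideal.add_mem_iff_left _ (Ideal.mul_mem_right _ _ hx)).mp (hi i)
    · have hDn : D ∉ p := by
        intro hDp
        apply hx
        refine hp.mem_of_pow_mem h ?_
        have e : x0 ^ h = (x0 ^ h - D + y0 * x0 * D) + D * (1 - y0 * x0) := by ring
        rw [e]
        exact Ideal.add_mem _ h0 (Ideal.mul_mem_right _ _ hDp)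
      have hy : ∀ i, y i ∈ p := fun i =>
        (hp.mem_or_mem (hDy p (fun i => by rw [hM]; exact hi i) i)).resolve_left hDn
      have ha : ∀ i, a i ∈ p := fun i => by
        rw [hC]; exact Ideal.sum_mem _ fun j _ => Ideal.mul_mem_left _ _ (hy j)
      refine ⟨ha, Or.inr ⟨?_, hy⟩⟩
      have := (hq0 ha).mp h0
      exact (hp.mem_or_mem this).resolve_right fun hh => hx (hp.mem_of_pow_mem _ hh)
  · rintro ⟨ha, hxy⟩
    refine ⟨(hq0 ha).mpr ?_, fun i => Ideal.add_mem _ ?_ ?_⟩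
    · rcases hxy with hx | ⟨hy, _⟩
      · exact Ideal.mul_mem_left _ _ (Ideal.pow_mem_of_mem _ hx _ (Nat.succ_pos _))
      · exact Ideal.mul_mem_right _ _ hy
    · exact Ideal.pow_mem_of_mem _ (ha i) _ two_pos
    · rcases hxy with hx | ⟨_, hy⟩
      · exact Ideal.mul_mem_right _ _ hx
      · exact Ideal.mul_mem_left _ _ (hy i)

theorem radical_eq_of_primes {R : Type*} [CommRing R] (I J : Ideal R)
    (h : ∀ p : Ideal R, p.IsPrime → (I ≤ p ↔ J ≤ p)) : I.radical = J.radical := by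
  rw [Ideal.radical_eq_sInf, Ideal.radical_eq_sInf]
  congr 1
  ext p
  constructor
  · rintro ⟨h1, h2⟩; exact ⟨(h p h2).mp h1, h2⟩
  · rintro ⟨h1, h2⟩; exact ⟨(h p h2).mpr h1, h2⟩

theorem ara_cone_le (Δ : Set (Finset V)) (hΔ : IsSimplicialComplex Δ) (F : Finset V)
    (hF : F ∈ Δ) (w : V) (hw : w ∉ F) (hG : insert w F ∈ Δ) (m : ℕ)
    (hm : ((insert w F)ᶜ).card = m) (a : Fin m → MvPolynomial V K)
    (ha : (Ideal.span (Set.range a)).radical = (srIdeal K Δ).radical) :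
    ara (srIdeal K (coneUnion Δ F)) ≤ m + 1 := by
  have e : Fin m ≃ {v // v ∈ (insert w F)ᶜ} :=
    (Fintype.equivFinOfCardEq (by rw [Fintype.card_coe]; exact hm)).symm
  let ρ : MvPolynomial V K →+* MvPolynomial (Option V) K :=
    (rename (some : V → Option V)).toRingHom
  have hprime := facePrime_isPrime K (insert w F)
  have haG : ∀ i, ∃ c : Fin m → MvPolynomial V K, a i = ∑ j, c j * X (e j).1 := by
    intro i
    have h1 : a i ∈ facePrime K (insert w F) := by
      have : a i ∈ (srIdeal K Δ).radical := by
        rw [← ha]; exact Ideal.le_radical (Ideal.subset_span ⟨i, rfl⟩)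
      exact (hprime.radical_le_iff.mpr (srIdeal_le_facePrime K Δ hΔ _ hG)) this
    have h2 : facePrime K (insert w F) =
        Ideal.span (Set.range fun j => (X (e j).1 : MvPolynomial V K)) := by
      unfold facePrime
      congr 1
      ext f
      constructor
      · rintro ⟨v, hv, rfl⟩
        have hv' : v ∈ (insert w F)ᶜ := Finset.mem_compl.mpr hv
        exact ⟨e.symm ⟨v, hv'⟩, by simp⟩
      · rintro ⟨j, rfl⟩
        exact ⟨(e j).1, Finset.mem_compl.mp (e j).2, rfl⟩
    rw [h2] at h1
    obtain ⟨c, hc⟩ := Ideal.mem_span_range_iff_exists_fun.mp h1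
    exact ⟨c, hc.symm⟩
  choose c hc using haG
  obtain ⟨q0, q, hq⟩ := det_trick (fun i => ρ (a i)) (fun j => X (some (e j).1))
    (X (some w)) (X none) (Matrix.of fun i j => ρ (c i j)) (by
      intro i
      have := congrArg ρ (hc i)
      rw [this, map_sum]
      refine Finset.sum_congr rfl fun j _ => ?_
      rw [map_mul]
      simp [ρ])
  refine Nat.sInf_le ⟨Fin.cons q0 q, radical_eq_of_primes _ _ fun p hp => ?_⟩
  rw [coneUnion_le_iff K Δ hΔ F hF p hp, Ideal.span_le, Set.range_subset_iff, Fin.forall_fin_succ]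
  simp only [Fin.cons_zero, Fin.cons_succ, SetLike.mem_coe]
  rw [hq p hp]
  have hp' : (p.comap ρ).IsPrime := Ideal.comap_isPrime ρ p
  refine and_congr ?_ (or_congr Iff.rfl ?_)
  · change _ ↔ srIdeal K Δ ≤ p.comap ρ
    rw [← hp'.radical_le_iff, ← ha, hp'.radical_le_iff, Ideal.span_le, Set.range_subset_iff]
    rfl
  · constructor
    · rintro ⟨h0, h1⟩ v hv
      by_cases hvw : v = w
      · rw [hvw]; exact h0
      · have hv' : v ∈ (insert w F)ᶜ := by simp [hv, hvw]
        have := h1 (e.symm ⟨v, hv'⟩)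
        simpa using this
    · intro h
      refine ⟨h w hw, fun j => h _ ?_⟩
      have := Finset.mem_compl.mp (e j).2
      exact fun hh => this (Finset.mem_insert_of_mem hh)

end Helpers

/-- for `K` algebraically closed, if `I_Δ` is a set-theoretic complete
intersection and `F` is a subfacet of `Δ`, then `I_{Δ'}` is also a set-theoretic
complete intersection, where `Δ' = Δ ∪ co_{x₀}F`. -/
theorem stci_coneUnion_subfacet {V : Type*} [Fintype V] [DecidableEq V]
    (K : Type*) [Field K] [IsAlgClosed K]
    (Δ : Set (Finset V)) (hΔ : IsSimplicialComplex Δ)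
    (hstci : (ara (srIdeal K Δ) : ℕ∞) = idealHeight (srIdeal K Δ))
    (F : Finset V) (hF : IsSubfacet Δ F) :
    (ara (srIdeal K (coneUnion Δ F)) : ℕ∞) = idealHeight (srIdeal K (coneUnion Δ F)) := by
  have hbdd : BddAbove (Finset.card '' Δ) := by
    refine ⟨Fintype.card V, ?_⟩
    rintro _ ⟨G, _, rfl⟩
    exact Finset.card_le_univ G
  have hle : ∀ G ∈ Δ, G.card ≤ sSup (Finset.card '' Δ) := fun G hG =>
    le_csSup hbdd ⟨G, hG, rfl⟩
  obtain ⟨G0, hG0, hG0c⟩ : sSup (Finset.card '' Δ) ∈ Finset.card '' Δ :=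
    Nat.sSup_mem ⟨_, F, hF.1, rfl⟩ hbdd
  have hFc : F.card = sSup (Finset.card '' Δ) - 1 := hF.2
  generalize sSup (Finset.card '' Δ) = d at *
  obtain ⟨a, ha⟩ := ara_spec (srIdeal K Δ)
  rcases isEmpty_or_nonempty V with hV | ⟨⟨v0⟩⟩
  · have hbot : srIdeal K (coneUnion Δ F) = ⊥ := by
      unfold srIdeal
      rw [Ideal.span_eq_bot]
      rintro _ ⟨S, hS, rfl⟩
      exact absurd (Or.inr fun x _ => by
        cases x with
        | none => simp
        | some v => exact hV.elim v) hS
    rw [hbot]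
    have h1 : ara (⊥ : Ideal (MvPolynomial (Option V) K)) = 0 := by
      refine Nat.le_zero.mp (Nat.sInf_le ⟨Fin.elim0, ?_⟩)
      simp
    rw [h1]
    have h2 := idealHeight_le (⊥ : Ideal (MvPolynomial (Option V) K)) ⊥ Ideal.isPrime_bot le_rfl
    rw [Ideal.height_bot] at h2
    exact (le_antisymm h2 bot_le).symm
  have hd : 1 ≤ d := by simpa using hle _ (hΔ.1 v0)
  -- the height of `I_Δ`
  have hge : ((Fintype.card V - d : ℕ) : ℕ∞) ≤ idealHeight (srIdeal K Δ) := by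
    refine srIdeal_height_ge K Δ _ fun G hG => ?_
    rw [Finset.card_compl]
    have := hle G hG
    omega
  have hle' : idealHeight (srIdeal K Δ) ≤ ((Fintype.card V - d : ℕ) : ℕ∞) := by
    have := (idealHeight_le _ _ (facePrime_isPrime K G0)
      (srIdeal_le_facePrime K Δ hΔ G0 hG0)).trans (facePrime_height_le K G0)
    rwa [Finset.card_compl, hG0c] at this
  have hm : ara (srIdeal K Δ) = Fintype.card V - d := by
    have := hstci.trans (le_antisymm hle' hge)
    exact_mod_cast this
  have hdn : d ≤ Fintype.card V := hG0c ▸ Finset.card_le_univ G0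
  -- `F` is not a facet
  obtain ⟨w, hw, hG⟩ : ∃ w, w ∉ F ∧ insert w F ∈ Δ := by
    by_contra hcon
    push Not at hcon
    have hp := facePrime_isPrime K F
    have hmin : facePrime K F ∈ (srIdeal K Δ).minimalPrimes := by
      refine ⟨⟨hp, srIdeal_le_facePrime K Δ hΔ F hF.1⟩, ?_⟩
      rintro p ⟨hp1, hp2⟩ hpF
      obtain ⟨G, hGΔ, hGp⟩ := exists_face_le K Δ p hp1 hp2
      have hFG : F ⊆ G := by
        intro v hv
        by_contra hvG
        have := hpF (hGp ((X_mem_facePrime K G v).mpr hvG))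
        exact (X_mem_facePrime K F v).mp this hv
      have : G ⊆ F := by
        intro v hv
        by_contra hvF
        exact hcon v hvF (hΔ.2 G hGΔ _ (Finset.insert_subset hv hFG))
      exact (facePrime_anti K this).trans hGp
    have h1 := (facePrime_height_ge K F).trans (krull_radical _ _ hmin a ha)
    rw [Finset.card_compl, hm] at h1
    have h1 : Fintype.card V - F.card ≤ Fintype.card V - d := by exact_mod_cast h1
    omega
  have hcard : ((insert w F)ᶜ).card = ara (srIdeal K Δ) := by
    rw [Finset.card_compl, Finset.card_insert_of_notMem hw, hm]
    omega
  have hup := ara_cone_le K Δ hΔ F hF.1 w hw hG _ hcard a ha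
  have hlow : ((Fintype.card V - d + 1 : ℕ) : ℕ∞) ≤ idealHeight (srIdeal K (coneUnion Δ F)) := by
    refine srIdeal_height_ge K _ _ fun G hG => ?_
    rw [Finset.card_compl, Fintype.card_option]
    rcases hG with ⟨G', hG', rfl⟩ | hG
    · have := hle G' hG'
      simp only [Finset.card_map]
      omega
    · have h1 := Finset.card_le_card hG
      have h2 := Finset.card_insert_le (none : Option V) (F.map Function.Embedding.some)
      rw [Finset.card_map] at h2
      omega
  obtain ⟨b, hb⟩ := ara_spec (srIdeal K (coneUnion Δ F))
  have hne : srIdeal K (coneUnion Δ F) ≠ ⊤ := by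
    intro htop
    have hle2 : srIdeal K (coneUnion Δ F) ≤
        facePrime K (∅ : Finset (Option V)) := by
      refine Ideal.span_le.mpr ?_
      rintro _ ⟨S, hS, rfl⟩
      obtain ⟨v, hv⟩ : S.Nonempty := by
        rw [Finset.nonempty_iff_ne_empty]
        rintro rfl
        exact hS (Or.inr (Finset.empty_subset _))
      exact prod_mem_of_mem _ S _ v hv ((X_mem_facePrime K _ v).mpr (by simp))
    exact (facePrime_isPrime K (∅ : Finset (Option V))).ne_top (top_le_iff.mp (htop ▸ hle2))
  obtain ⟨p, hp⟩ := Ideal.nonempty_minimalPrimes hne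
  have hkr := (idealHeight_le _ p hp.1.1 hp.1.2).trans (krull_radical _ _ hp b hb)
  refine le_antisymm ?_ hkr
  refine le_trans ?_ hlow
  rw [← hm]
  exact_mod_cast hup
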